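/- For any pair of discrete random variables (X, Y) with X uniform on {0,1} and Y taking values in a finite alphabet, the Bhattacharyya parameter satisfies Z(X|Y) ≥ H(X|Y), where H is the conditional Shannon entropy in bits. -/

import Mathlib

/-! Conditionally on `Y = y`, the entropy of `X` is a value of the binary entropy function `h`, so
the claim is the pointwise bound `h q ≤ 2 √(q (1 - q))` (in bits), averaged over `y`. The ratio
`h q / √(q (1 - q))` is symmetric about `q = 1 / 2`, where it takes the value `2`, and its
derivative has the sign of `-q log q + (1 - q) log (1 - q)`, which is nonnegative on `(0, 1 / 2]`:
as `1 - q` is the mean of `q` and `1` with weights `q / (1 - q)` and `(1 - 2 q) / (1 - q)`, this is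
Jensen's inequality for the logarithm. -/

open Finset

/-- Conditional Shannon entropy (in bits) of `X` given `Y`, for a joint pmf `p`. -/
noncomputable def condEnt {α β : Type} [Fintype α] [Fintype β] (p : α → β → ℝ) : ℝ :=
  -∑ y : β, ∑ x : α, p x y * Real.logb 2 (p x y / ∑ x' : α, p x' y)

/-- Bhattacharyya parameter `Z(X|Y) = ∑_y √(P(y|0)·P(y|1))` for `X` uniform on `{0,1}`
with joint pmf `p` (so `P(y|x) = 2·p x y`). -/
noncomputable def bhat {β : Type} [Fintype β] (p : Bool → β → ℝ) : ℝ :=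
  ∑ y : β, Real.sqrt ((2 * p false y) * (2 * p true y))

section BinaryEntropy

open Real

lemma negMulLog_one_sub_le_negMulLog {q : ℝ} (hq₀ : 0 ≤ q) (hq : q ≤ 1 / 2) :
    negMulLog (1 - q) ≤ negMulLog q := by
  rcases hq₀.eq_or_lt with rfl | hq₀
  · simp
  have one_sub_pos : 0 < 1 - q := by linarith
  have jensen : q / (1 - q) * log q ≤ log (1 - q) := by
    have mean_eq : q / (1 - q) * q + (1 - 2 * q) / (1 - q) * 1 = 1 - q := by
      field_simp
      ring
    have concave := strictConcaveOn_log_Ioi.concaveOn.2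
      (Set.mem_Ioi.2 hq₀) (Set.mem_Ioi.2 one_pos)
      (show 0 ≤ q / (1 - q) by positivity)
      (show 0 ≤ (1 - 2 * q) / (1 - q) from div_nonneg (by linarith) one_sub_pos.le)
      (by field_simp; ring)
    simpa only [smul_eq_mul, mean_eq, log_one, mul_zero, add_zero] using concave
  have : q * log q ≤ (1 - q) * log (1 - q) := by
    rw [div_mul_eq_mul_div, div_le_iff₀' one_sub_pos] at jensen
    exact jensen
  simpa only [negMulLog, neg_mul, neg_le_neg_iff] using this

lemma hasDerivAt_binEntropy_div_sqrt {q : ℝ} (hq₀ : 0 < q) (hq₁ : q < 1) :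
    HasDerivAt (fun q ↦ binEntropy q / √(q * (1 - q)))
      ((negMulLog q - negMulLog (1 - q)) / (2 * √(q * (1 - q)) ^ 3)) q := by
  have var_pos : 0 < q * (1 - q) := mul_pos hq₀ (sub_pos.2 hq₁)
  have sqrt_var_pos : 0 < √(q * (1 - q)) := sqrt_pos.2 var_pos
  have sq_sqrt_var : √(q * (1 - q)) ^ 2 = q * (1 - q) := sq_sqrt var_pos.le
  have deriv_var : HasDerivAt (fun q : ℝ ↦ q * (1 - q)) (1 - 2 * q) q :=
    ((hasDerivAt_id' q).mul ((hasDerivAt_id' q).const_sub 1)).congr_deriv (by ring)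
  refine ((hasDerivAt_binEntropy hq₀.ne' hq₁.ne).div (deriv_var.sqrt var_pos.ne')
    sqrt_var_pos.ne').congr_deriv ?_
  rw [binEntropy_eq_negMulLog_add_negMulLog_one_sub, negMulLog, negMulLog]
  field_simp
  rw [sq_sqrt_var]
  ring

lemma monotoneOn_binEntropy_div_sqrt :
    MonotoneOn (fun q ↦ binEntropy q / √(q * (1 - q))) (Set.Ioc 0 (1 / 2)) := by
  have ratio_deriv {q : ℝ} (hq : q ∈ Set.Ioc 0 (1 / 2)) :=
    hasDerivAt_binEntropy_div_sqrt hq.1 (hq.2.trans_lt one_half_lt_one)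
  refine monotoneOn_of_hasDerivWithinAt_nonneg (convex_Ioc 0 (1 / 2))
    (fun q hq ↦ (ratio_deriv hq).continuousAt.continuousWithinAt)
    (fun q hq ↦ (ratio_deriv (interior_subset hq)).hasDerivWithinAt) fun q hq ↦ ?_
  obtain ⟨hq₀, hq⟩ := interior_subset hq
  exact div_nonneg (sub_nonneg.2 (negMulLog_one_sub_le_negMulLog hq₀.le hq)) (by positivity)

lemma binEntropy_le_mul_sqrt (q : ℝ) : binEntropy q ≤ 2 * log 2 * √(q * (1 - q)) := by
  wlog hq : q ≤ 1 / 2 generalizing q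
  · simpa only [binEntropy_one_sub, sub_sub_cancel, mul_comm (1 - q)] using
      this (1 - q) (by linarith)
  rcases le_or_gt q 0 with hq₀ | hq₀
  · exact (binEntropy_nonpos_of_nonpos hq₀).trans (by positivity)
  have value_half : binEntropy (1 / 2) / √(1 / 2 * (1 - 1 / 2)) = 2 * log 2 := by
    rw [sub_half, sqrt_mul_self one_half_pos.le, one_div, binEntropy_two_inv]
    ring
  rw [← div_le_iff₀ (sqrt_pos.2 (mul_pos hq₀ (by linarith))), ← value_half]
  exact monotoneOn_binEntropy_div_sqrt ⟨hq₀, hq⟩ ⟨one_half_pos, le_rfl⟩ hq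

lemma add_mul_binEntropy_div_add (a b : ℝ) :
    (a + b) * binEntropy (a / (a + b)) =
      -(a * log (a / (a + b)) + b * log (b / (a + b))) := by
  rcases eq_or_ne (a + b) 0 with h | h
  · simp [h]
  have compl_eq : 1 - a / (a + b) = b / (a + b) := by
    field_simp
    ring
  rw [binEntropy, compl_eq, log_inv, log_inv]
  field_simp
  ring

lemma add_mul_binEntropy_div_add_le {a b : ℝ} (h : 0 ≤ a + b) :
    (a + b) * binEntropy (a / (a + b)) ≤ 2 * log 2 * √(a * b) := by
  rcases h.eq_or_lt with h | h
  · rw [← h, zero_mul]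
    positivity
  have var_eq : a / (a + b) * (1 - a / (a + b)) = a * b / (a + b) ^ 2 := by
    field_simp
    ring
  calc (a + b) * binEntropy (a / (a + b))
      ≤ (a + b) * (2 * log 2 * √(a / (a + b) * (1 - a / (a + b)))) := by
        gcongr
        exact binEntropy_le_mul_sqrt _
    _ = 2 * log 2 * √(a * b) := by
        rw [var_eq, sqrt_div' _ (sq_nonneg _), sqrt_sq h.le]
        field_simp

end BinaryEntropy

lemma condEnt_eq_sum_binEntropy {β : Type} [Fintype β] (p : Bool → β → ℝ) :
    condEnt p = ∑ y, (p true y + p false y) *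
      Real.binEntropy (p true y / (p true y + p false y)) / Real.log 2 := by
  simp only [condEnt, Fintype.sum_bool, ← sum_neg_distrib, add_mul_binEntropy_div_add, Real.logb]
  exact sum_congr rfl fun y _ ↦ by ring

lemma bhat_eq_sum_sqrt {β : Type} [Fintype β] (p : Bool → β → ℝ) :
    bhat p = ∑ y, 2 * √(p true y * p false y) := by
  refine sum_congr rfl fun y _ ↦ ?_
  rw [show 2 * p false y * (2 * p true y) = 2 ^ 2 * (p true y * p false y) by ring,
    Real.sqrt_mul (by positivity), Real.sqrt_sq zero_le_two]

theorem condEnt_le_bhat_general {β : Type} [Fintype β] (p : Bool → β → ℝ)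
    (hp : ∀ x y, 0 ≤ p x y) : condEnt p ≤ bhat p := by
  rw [condEnt_eq_sum_binEntropy, bhat_eq_sum_sqrt]
  refine sum_le_sum fun y _ ↦ ?_
  rw [div_le_iff₀ (Real.log_pos one_lt_two), mul_right_comm]
  exact add_mul_binEntropy_div_add_le (add_nonneg (hp true y) (hp false y))

/-- `Z(X|Y) ≥ H(X|Y)` for `X` uniform on `{0,1}`. -/
theorem condEnt_le_bhat {β : Type} [Fintype β] (p : Bool → β → ℝ)
    (hp : ∀ x y, 0 ≤ p x y)
    (hsum : ∑ x : Bool, ∑ y : β, p x y = 1)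
    (hunif : ∀ x : Bool, ∑ y : β, p x y = 1 / 2) :
    condEnt p ≤ bhat p :=
  condEnt_le_bhat_general p hp
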